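/- The Laurent polynomial C₂ lies in the ideal of ℂ[t^{±1}, M^{±1}] generated by the four polynomials g₁ = −M¹⁴(M⁸ − 1)(t⁴ + M⁸t⁴ − M⁴(1 + t⁸)), g₂ = −M¹⁰(M⁸ − 1)t²(t⁴ + M⁸t⁴ − M⁴(1 + t⁸)), g₃ = (M⁴ − 1)(M − t)(M + t)(Mt − 1)(Mt + 1)(M² + t²)(1 + M²t²)(M⁴ + M⁶ + M⁸ + 2M¹⁰ + 3M¹² + M¹⁴ + 2M¹⁶ − t⁴), and g₄ = t²(t − M)(M + t)(Mt − 1)(Mt + 1)(M² + t²)(1 + M²t²)(−M⁴ − M⁶ − M⁸ + M¹⁴ + M¹⁶ + t⁴). -/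

import Mathlib

/-!
Write `P = (M⁴ - t⁴)(t⁴M⁴ - 1)`, the factor common to all
the `gᵢ`.  Since `t` and `M` are units, `g₁` and `g₄` alone generate `P · (M⁸ - 1, t⁴ - M⁴)`:
`g₁ = -M¹⁴ P (M⁸ - 1)` and `g₄ = -t² P ((t⁴ - M⁴) + (M⁸ - 1)(M⁶ + M⁸))`
(`P_mul_mem_left`, `P_mul_mem_right`).

On the other side, `a₋₁(t, t⁻²M) = a₁` and `a₁(t, t²M) = a₋₁`, so
`C₁ = a₁ (a₀ · a₀(t, t²M) - a₁(t, t⁻²M) a₋₁ - a₁ · a₋₁(t, t²M))`.  The factor `a₁` contributes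
`M⁴ - t⁴`; after clearing denominators the bracket is divisible by `t⁴M⁴ - 1`, with a quotient in
`(M⁸ - 1, t⁴ - M⁴)` (`bracket_eq`).  Hence `C₂` is a monomial times an element of
`P · (M⁸ - 1, t⁴ - M⁴)`.
-/

noncomputable section

/-- The Laurent polynomial ring `ℂ[t^{±1}, M^{±1}]`, realized as the group algebra of `ℤ × ℤ`
over `ℂ`.  The element `mon a b` below is the monomial `t^a * M^b`. -/
abbrev R2 : Type := AddMonoidAlgebra ℂ (ℤ × ℤ)

instance : IsDomain R2 := NoZeroDivisors.to_isDomain _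

/-- The monomial `t^a * M^b` in `ℂ[t^{±1}, M^{±1}]`. -/
def mon (a b : ℤ) : R2 := AddMonoidAlgebra.single (a, b) (1 : ℂ)
/-- The exponent map corresponding to the substitution `(t, M) ↦ (t, t²M)`. -/
def eU : (ℤ × ℤ) ≃+ (ℤ × ℤ) where
  toFun p := (p.1 + 2 * p.2, p.2)
  invFun p := (p.1 - 2 * p.2, p.2)
  left_inv p := by ext <;> simp
  right_inv p := by ext <;> simp
  map_add' p q := by ext <;> simp <;> ring

/-- The exponent map corresponding to the substitution `(t, M) ↦ (t, t⁻²M)`. -/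
def eD : (ℤ × ℤ) ≃+ (ℤ × ℤ) where
  toFun p := (p.1 - 2 * p.2, p.2)
  invFun p := (p.1 + 2 * p.2, p.2)
  left_inv p := by ext <;> simp
  right_inv p := by ext <;> simp
  map_add' p q := by ext <;> simp <;> ring

/-- The exponent map corresponding to the substitution `(t, M) ↦ (t, M⁻¹)`. -/
def eI : (ℤ × ℤ) ≃+ (ℤ × ℤ) where
  toFun p := (p.1, -p.2)
  invFun p := (p.1, -p.2)
  left_inv p := by ext <;> simp
  right_inv p := by ext <;> simp
  map_add' p q := by ext <;> simp <;> ring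

/-- The substitution automorphism `F(t, M) ↦ F(t, t²M)` of `ℂ[t^{±1}, M^{±1}]`. -/
def sU : R2 ≃ₐ[ℂ] R2 := AddMonoidAlgebra.domCongr ℂ ℂ eU

/-- The substitution automorphism `F(t, M) ↦ F(t, t⁻²M)` of `ℂ[t^{±1}, M^{±1}]`. -/
def sD : R2 ≃ₐ[ℂ] R2 := AddMonoidAlgebra.domCongr ℂ ℂ eD

/-- The substitution automorphism `F(t, M) ↦ F(t, M⁻¹)` of `ℂ[t^{±1}, M^{±1}]`. -/
def sI : R2 ≃ₐ[ℂ] R2 := AddMonoidAlgebra.domCongr ℂ ℂ eI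
/-- `a₁(t,M) = t⁻²M² − t²M⁻²`. -/
def a1 : R2 := mon (-2) 2 - mon 2 (-2)

/-- `a₋₁(t,M) = t²M² − t⁻²M⁻²`. -/
def am1 : R2 := mon 2 2 - mon (-2) (-2)

/-- `a₀(t,M) = (M² − M⁻²)(−M⁴ − M⁻⁴ + M² + M⁻² + t⁴ + t⁻⁴)`. -/
def a0 : R2 :=
  (mon 0 2 - mon 0 (-2)) *
    (-(mon 0 4) - mon 0 (-4) + mon 0 2 + mon 0 (-2) + mon 4 0 + mon (-4) 0)

/-- `A₁(t,M) = −a₁(t,M)·a₁(t,t²M)·a₋₁(t,t⁻²M)`. -/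
def A1 : R2 := -(a1 * sU a1 * sD am1)

/-- `B₁(t,M) = a₀(t,M)·a₁(t,t²M)·a₋₁(t,t⁻²M)`. -/
def B1 : R2 := a0 * sU a1 * sD am1

/-- `C₁(t,M) = −a₁(t,M)·a₁(t,t⁻²M)·a₁(t,t²M) + a₀(t,M)·a₀(t,t²M)·a₋₁(t,t⁻²M)
    − a₁(t,M)·a₋₁(t,t⁻²M)·a₋₁(t,t²M)`. -/
def C1 : R2 := -(a1 * sD a1 * sU a1) + a0 * sU a0 * sD am1 - a1 * sD am1 * sU am1
/-- `g₁ = −M¹⁴(M⁸ − 1)(t⁴ + M⁸t⁴ − M⁴(1 + t⁸))`. -/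
def g1 : R2 := -(mon 0 14) * (mon 0 8 - 1) * (mon 4 0 + mon 4 8 - mon 0 4 * (1 + mon 8 0))

/-- `g₂ = −M¹⁰(M⁸ − 1)t²(t⁴ + M⁸t⁴ − M⁴(1 + t⁸))`. -/
def g2 : R2 :=
  -(mon 0 10) * (mon 0 8 - 1) * mon 2 0 * (mon 4 0 + mon 4 8 - mon 0 4 * (1 + mon 8 0))

/-- `g₃ = (M⁴ − 1)(M − t)(M + t)(Mt − 1)(Mt + 1)(M² + t²)(1 + M²t²)
(M⁴ + M⁶ + M⁸ + 2M¹⁰ + 3M¹² + M¹⁴ + 2M¹⁶ − t⁴)`. -/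
def g3 : R2 :=
  (mon 0 4 - 1) * (mon 0 1 - mon 1 0) * (mon 0 1 + mon 1 0) * (mon 1 1 - 1) * (mon 1 1 + 1) *
    (mon 0 2 + mon 2 0) * (1 + mon 2 2) *
    (mon 0 4 + mon 0 6 + mon 0 8 + 2 * mon 0 10 + 3 * mon 0 12 + mon 0 14 + 2 * mon 0 16
      - mon 4 0)

/-- `g₄ = t²(t − M)(M + t)(Mt − 1)(Mt + 1)(M² + t²)(1 + M²t²)
(−M⁴ − M⁶ − M⁸ + M¹⁴ + M¹⁶ + t⁴)`. -/
def g4 : R2 :=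
  mon 2 0 * (mon 1 0 - mon 0 1) * (mon 0 1 + mon 1 0) * (mon 1 1 - 1) * (mon 1 1 + 1) *
    (mon 0 2 + mon 2 0) * (1 + mon 2 2) *
    (-(mon 0 4) - mon 0 6 - mon 0 8 + mon 0 14 + mon 0 16 + mon 4 0)

/-- `C₂ = t⁸M¹⁰C₁`. -/
def C2 : R2 := mon 8 10 * C1

lemma mon_mul (a b c d : ℤ) : mon a b * mon c d = mon (a + c) (b + d) := by
  simp [mon, AddMonoidAlgebra.single_mul_single]

lemma mon_zero : mon 0 0 = 1 := rfl

lemma sU_mon (a b : ℤ) : sU (mon a b) = mon (a + 2 * b) b := by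
  simp [sU, mon, eU]

lemma sD_mon (a b : ℤ) : sD (mon a b) = mon (a - 2 * b) b := by
  simp [sD, mon, eD]

lemma mon_pow (a b : ℤ) (n : ℕ) : mon a b ^ n = mon (n * a) (n * b) := by
  simp [mon, AddMonoidAlgebra.single_pow]

lemma mon_eq_pos (a b : ℕ) : mon a b = mon 1 0 ^ a * mon 0 1 ^ b := by
  simp [mon_pow, mon_mul]

/-- The common factor `P = (M⁴ - t⁴)(t⁴M⁴ - 1)` of the four generators. -/
def P : R2 := (mon 0 1 ^ 4 - mon 1 0 ^ 4) * (mon 1 0 ^ 4 * mon 0 1 ^ 4 - 1)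

lemma g1_eq : g1 = -(mon 0 14) * (P * (mon 0 1 ^ 8 - 1)) := by
  have h1 := mon_eq_pos 0 14
  have h2 := mon_eq_pos 0 8
  have h3 := mon_eq_pos 4 0
  have h4 := mon_eq_pos 4 8
  have h5 := mon_eq_pos 0 4
  have h6 := mon_eq_pos 8 0
  push_cast at h1 h2 h3 h4 h5 h6
  rw [g1, P, h1, h2, h3, h4, h5, h6]
  ring

lemma g4_eq : g4 = -(mon 2 0) * (P * ((mon 1 0 ^ 4 - mon 0 1 ^ 4) +
    (mon 0 1 ^ 8 - 1) * (mon 0 1 ^ 6 + mon 0 1 ^ 8))) := by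
  have h1 := mon_eq_pos 2 0
  have h2 := mon_eq_pos 1 1
  have h3 := mon_eq_pos 0 2
  have h4 := mon_eq_pos 2 2
  have h5 := mon_eq_pos 0 4
  have h6 := mon_eq_pos 0 6
  have h7 := mon_eq_pos 0 8
  have h8 := mon_eq_pos 0 14
  have h9 := mon_eq_pos 0 16
  have h10 := mon_eq_pos 4 0
  push_cast at h1 h2 h3 h4 h5 h6 h7 h8 h9 h10
  rw [g4, P, h1, h2, h3, h4, h5, h6, h7, h8, h9, h10]
  ring

lemma P_mul_mem_left :
    P * (mon 0 1 ^ 8 - 1) ∈ Ideal.span ({g1, g2, g3, g4} : Set R2) := by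
  have hu : mon 0 (-14) * mon 0 14 = 1 := by simp [mon_mul, mon_zero]
  have h : P * (mon 0 1 ^ 8 - 1) = -(mon 0 (-14)) * g1 := by
    rw [g1_eq]
    linear_combination -(P * (mon 0 1 ^ 8 - 1)) * hu
  rw [h]
  exact Ideal.mul_mem_left _ _ (Ideal.subset_span (by simp))

lemma P_mul_mem_right :
    P * (mon 1 0 ^ 4 - mon 0 1 ^ 4) ∈ Ideal.span ({g1, g2, g3, g4} : Set R2) := by
  have hu : mon (-2) 0 * mon 2 0 = 1 := by simp [mon_mul, mon_zero]
  have h : P * (mon 1 0 ^ 4 - mon 0 1 ^ 4) = -(mon (-2) 0) * g4 -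
      (mon 0 1 ^ 6 + mon 0 1 ^ 8) * (P * (mon 0 1 ^ 8 - 1)) := by
    rw [g4_eq]
    linear_combination -(P * ((mon 1 0 ^ 4 - mon 0 1 ^ 4) +
      (mon 0 1 ^ 8 - 1) * (mon 0 1 ^ 6 + mon 0 1 ^ 8))) * hu
  rw [h]
  exact Ideal.sub_mem _ (Ideal.mul_mem_left _ _ (Ideal.subset_span (by simp)))
    (Ideal.mul_mem_left _ _ P_mul_mem_left)

lemma sD_am1 : sD am1 = a1 := by
  simp [am1, a1, sD_mon]

lemma sU_a1 : sU a1 = am1 := by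
  simp [am1, a1, sU_mon]

lemma a1_eq : a1 = mon (-2) (-2) * (mon 0 1 ^ 4 - mon 1 0 ^ 4) := by
  simp [a1, mul_sub, mon_pow, mon_mul]

lemma am1_eq : am1 = mon (-2) (-2) * (mon 1 0 ^ 4 * mon 0 1 ^ 4 - 1) := by
  simp [am1, mul_sub, mon_pow, mon_mul]

lemma sD_a1_eq : sD a1 = mon (-6) (-2) * (mon 0 1 ^ 4 - mon 1 0 ^ 12) := by
  simp [a1, sD_mon, mul_sub, mon_pow, mon_mul]

lemma sU_am1_eq : sU am1 = mon (-6) (-2) * (mon 1 0 ^ 12 * mon 0 1 ^ 4 - 1) := by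
  simp [am1, sU_mon, mul_sub, mon_pow, mon_mul]

/-- `t⁴M⁶ a₀` as a polynomial in `t` and `M`. -/
def a0Num (t M : R2) : R2 :=
  (M ^ 4 - 1) * (-(t ^ 4 * M ^ 8) - t ^ 4 + t ^ 4 * M ^ 6 + t ^ 4 * M ^ 2 + t ^ 8 * M ^ 4 + M ^ 4)

/-- `t¹²M⁶ a₀(t, t²M)` as a polynomial in `t` and `M`. -/
def sUa0Num (t M : R2) : R2 :=
  (t ^ 8 * M ^ 4 - 1) * (-(t ^ 16 * M ^ 8) - 1 + t ^ 12 * M ^ 6 + t ^ 4 * M ^ 2 +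
    t ^ 12 * M ^ 4 + t ^ 4 * M ^ 4)

lemma a0_eq : a0 = mon (-4) (-6) * a0Num (mon 1 0) (mon 0 1) := by
  have h1 : mon 0 2 - mon 0 (-2) = mon 0 (-2) * (mon 0 1 ^ 4 - 1) := by
    simp [mul_sub, mon_pow, mon_mul]
  have h2 : mon (-4) (-6) = mon 0 (-2) * mon (-4) (-4) := by simp [mon_mul]
  rw [a0, a0Num, h1, h2, mul_mul_mul_comm]
  simp [mul_sub, mul_add, mon_pow, mon_mul]

lemma sU_a0_eq : sU a0 = mon (-12) (-6) * sUa0Num (mon 1 0) (mon 0 1) := by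
  have h1 : mon 4 2 - mon (-4) (-2) = mon (-4) (-2) * (mon 1 0 ^ 8 * mon 0 1 ^ 4 - 1) := by
    simp [mul_sub, mon_pow, mon_mul]
  have h2 : mon (-12) (-6) = mon (-4) (-2) * mon (-8) (-4) := by simp [mon_mul]
  rw [sUa0Num, h2, mul_mul_mul_comm, ← h1]
  simp [a0, sU_mon, mul_sub, mul_add, mon_pow, mon_mul]

/-- The quotient of the cleared bracket by `t⁴M⁴ - 1`, written as a combination of `t⁴ - M⁴` and
`M⁸ - 1`: its coefficients come from division by `t⁴ - M⁴` with respect to `t⁴`, followed by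
division of the remainder, a polynomial in `M`, by `M⁸ - 1`. -/
lemma bracket_eq (t M : R2) : ∃ α β : R2,
    a0Num t M * sUa0Num t M - t ^ 8 * M ^ 8 * ((M ^ 4 - t ^ 12) * (t ^ 4 * M ^ 4 - 1)) -
        t ^ 8 * M ^ 8 * ((M ^ 4 - t ^ 4) * (t ^ 12 * M ^ 4 - 1)) =
      (t ^ 4 * M ^ 4 - 1) * (α * (M ^ 8 - 1) + β * (t ^ 4 - M ^ 4)) := by
  refine ⟨
      -M ^ 6 + M ^ 12 + M ^ 18 + 2 * M ^ 20 + M ^ 22 + M ^ 28 - M ^ 34,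
      -1 + M ^ 2 + M ^ 4 - M ^ 8 - M ^ 10 - M ^ 14 - M ^ 16 - M ^ 18 + M ^ 22 + M ^ 24 + M ^
      26 + M ^ 30 + M ^ 32 - M ^ 38 + t ^ 4 * M ^ 2 - t ^ 4 * M ^ 6 - t ^ 4 * M ^ 8 - t ^ 4
      * M ^ 10 - t ^ 4 * M ^ 12 - t ^ 4 * M ^ 14 + t ^ 4 * M ^ 18 + t ^ 4 * M ^ 20 + t ^ 4 *
      M ^ 22 + t ^ 4 * M ^ 26 + t ^ 4 * M ^ 28 - t ^ 4 * M ^ 34 + t ^ 8 * M ^ 4 - t ^ 8 * M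
      ^ 6 - t ^ 8 * M ^ 8 - t ^ 8 * M ^ 10 + t ^ 8 * M ^ 14 + t ^ 8 * M ^ 16 + t ^ 8 * M ^
      18 + t ^ 8 * M ^ 22 + t ^ 8 * M ^ 24 - t ^ 8 * M ^ 30 + t ^ 12 * M ^ 4 - t ^ 12 * M ^
      6 - 2 * t ^ 12 * M ^ 8 + 2 * t ^ 12 * M ^ 12 + t ^ 12 * M ^ 14 + t ^ 12 * M ^ 18 + t ^
      12 * M ^ 20 - t ^ 12 * M ^ 26 + t ^ 16 * M ^ 12 + t ^ 16 * M ^ 14 + t ^ 16 * M ^ 16 -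
      t ^ 16 * M ^ 22 - t ^ 20 * M ^ 8 + t ^ 20 * M ^ 12 + t ^ 20 * M ^ 14 - t ^ 20 * M ^ 18
      + t ^ 24 * M ^ 12 - t ^ 24 * M ^ 16, ?_⟩
  rw [a0Num, sUa0Num]
  ring

/-- The Laurent polynomial `C₂` lies in the ideal of `ℂ[t^{±1}, M^{±1}]` generated by the
Groebner basis elements `g₁, g₂, g₃, g₄`. -/
theorem C2_mem_span_groebner : C2 ∈ Ideal.span ({g1, g2, g3, g4} : Set R2) := by
  obtain ⟨α, β, h⟩ := bracket_eq (mon 1 0) (mon 0 1)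
  -- All three products in `C₁` share the denominator `t¹⁸M¹⁴`.
  have e1 : mon (-2) (-2) * mon (-6) (-2) * mon (-2) (-2) =
      mon (-18) (-14) * (mon 1 0 ^ 8 * mon 0 1 ^ 8) := by simp [mon_pow, mon_mul]
  have e2 : mon (-4) (-6) * mon (-12) (-6) * mon (-2) (-2) = mon (-18) (-14) := by
    simp [mon_mul]
  have key : C2 = mon 8 10 * mon (-18) (-14) *
      (α * (P * (mon 0 1 ^ 8 - 1)) + β * (P * (mon 1 0 ^ 4 - mon 0 1 ^ 4))) := by
    rw [C2, C1, sD_am1, sU_a1, sD_a1_eq, sU_am1_eq, sU_a0_eq, a0_eq, am1_eq, a1_eq, P]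
    generalize mon 1 0 = t at *
    generalize mon 0 1 = M at *
    generalize a0Num t M = A at *
    generalize sUa0Num t M = B at *
    linear_combination mon 8 10 * mon (-18) (-14) * (M ^ 4 - t ^ 4) * h
      + mon 8 10 * A * B * (M ^ 4 - t ^ 4) * e2
      - mon 8 10 * (M ^ 4 - t ^ 4) * ((M ^ 4 - t ^ 12) * (t ^ 4 * M ^ 4 - 1) +
          (M ^ 4 - t ^ 4) * (t ^ 12 * M ^ 4 - 1)) * e1
  rw [key]
  exact Ideal.mul_mem_left _ _ (Ideal.add_mem _ (Ideal.mul_mem_left _ _ P_mul_mem_left)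
    (Ideal.mul_mem_left _ _ P_mul_mem_right))
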